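/- arXiv:2206.04408 — 2 statements merged into one kernel-verified Lean document; each statement's English description precedes it below -/
import Mathlib

section
/- Let q ≥ 2, n ≥ 2, and gcd(d,q) = 1. Define the generalized prefer-same preference function S by S_j(a) = a + (j−1)·d (mod q) for j = 1,…,q, and let I = (I_1,…,I_n) be any n-word satisfying I_{k+1} = I_k + d(q−1) (mod q) for k = 1,…,n−1. Then the greedy sequence s_n = (S,I) is a full de Bruijn sequence of order n: every n-word over A occurs exactly once as a contiguous window of s_n. -/
/-!
In the de Bruijn graph the vertices are the words of length `n` and the edges those of length
`n + 1`. A word spells a walk in this graph. The greedy word never repeats an edge, and it halts at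
a vertex whose out-edges are all used. A walk that is not closed enters its last vertex more often
than it leaves it, so the greedy walk returns to its initial vertex `v₀`. In a closed walk each
vertex is entered as often as it is left, so a vertex whose out-edges are all used has all its
in-edges used as well.

Now follow, from any vertex `v`, the edges labelled by least preferred digits. Away from `v₀` the
greedy walk takes such an edge only after all the other out-edges. Hence if the next vertex is
exhausted, so is `v`. If the path leads to `v₀`, which is exhausted, then every vertex on it is
exhausted too.

For a preference function of span 1 with least preferred digit `f a` after `a`, the path from a
vertex with last digit `a` consists, after `n - 1` steps, of the words `b, f b, f (f b), …` with `b`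
running through the `f`-orbit of `a`. For the prefer-same function, `f a = a - d` and this orbit is
all of `ZMod q`.
-/

namespace PaperDB

/-- The last `s` entries of `l`. -/
def lastN {α : Type*} (s : ℕ) (l : List α) : List α := l.drop (l.length - s)

/-- The digit appended by the greedy rule, if any: the most preferred digit `c`
(according to the preference function `P`, evaluated at the last `s` digits,
`P x 0` being the most preferred digit) such that the `n`-window created by
appending `c` has not yet occurred as a contiguous subword. -/
def nextDigit (q s n : ℕ) (P : List (ZMod q) → Fin q → ZMod q)
    (l : List (ZMod q)) : Option (ZMod q) :=
  ((List.finRange q).map (fun i => P (lastN s l) i)).find?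
    (fun c => !decide ((lastN (n - 1) l ++ [c]) <:+: l))

/-- Fuel-bounded greedy extension. -/
def greedyAux (q s n : ℕ) (P : List (ZMod q) → Fin q → ZMod q) :
    ℕ → List (ZMod q) → List (ZMod q)
  | 0, l => l
  | f + 1, l =>
    match nextDigit q s n P l with
    | none => l
    | some c => greedyAux q s n P f (l ++ [c])

/-- The greedy sequence `(P, I)`: fuel `q ^ n` provably suffices for the
construction to halt, since every `n`-word occurs at most once. -/
def greedy (q s n : ℕ) (P : List (ZMod q) → Fin q → ZMod q)
    (I : List (ZMod q)) : List (ZMod q) :=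
  greedyAux q s n P (q ^ n) I

/-- The number of occurrences of `w` as a length-`n` contiguous window of `l`. -/
def windowCount (q n : ℕ) (w l : List (ZMod q)) : ℕ :=
  ((List.range (l.length + 1 - n)).filter
    (fun i => decide ((l.drop i).take n = w))).length

/-- `P` is a preference function (of span `s`): it assigns to every `s`-word a
permutation of the alphabet `ZMod q`. -/
def IsPrefFun (q s : ℕ) (P : List (ZMod q) → Fin q → ZMod q) : Prop :=
  ∀ x : List (ZMod q), x.length = s → Function.Bijective (P x)

/-- The generalized prefer-same preference function `S^{(q,d)}`, of span 1:
`S_j(a) = a + (j-1)·d (mod q)` for `j = 1,…,q`; the `Fin q`-index `j` denotes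
column `j+1`. -/
def SprefL (q d : ℕ) : List (ZMod q) → Fin q → ZMod q :=
  fun x j => x.headI + ((j : ℕ) : ZMod q) * (d : ZMod q)

open scoped Finset

section Windows

variable {α : Type*} {n : ℕ} {l v w : List α}

/-- The contiguous windows of length `n` of `l`, from left to right and with repetitions. In the
de Bruijn graph they are the vertices of the walk spelled by `l`, and the windows of length `n + 1`
are its edges. -/
def windows (n : ℕ) (l : List α) : List (List α) :=
  (List.range (l.length + 1 - n)).map fun i => (l.drop i).take n

lemma length_lastN (h : n ≤ l.length) : (lastN n l).length = n := by
  rw [lastN, List.length_drop]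
  omega

lemma lastN_lastN {m : ℕ} (hmn : m ≤ n) (hn : n ≤ l.length) : lastN m (lastN n l) = lastN m l := by
  rw [lastN, length_lastN hn, lastN, lastN, List.drop_drop]
  congr 1
  omega

lemma mem_windows : w ∈ windows n l ↔ w.length = n ∧ w <:+: l := by
  simp only [windows, List.mem_map, List.mem_range]
  constructor
  · rintro ⟨i, hi, rfl⟩
    refine ⟨by rw [List.length_take, List.length_drop]; omega, ?_⟩
    exact (List.take_prefix _ _).isInfix.trans (List.drop_suffix _ _).isInfix
  · rintro ⟨rfl, s, t, rfl⟩
    exact ⟨s.length, by simp only [List.length_append]; omega, by simp⟩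

lemma length_windows : (windows n l).length = l.length + 1 - n := by
  rw [windows, List.length_map, List.length_range]

lemma windows_length_self (l : List α) : windows l.length l = [l] := by
  simp [windows]

lemma windows_eq_map_dropLast_concat (h : n ≤ l.length) :
    windows n l = (windows (n + 1) l).map List.dropLast ++ [lastN n l] := by
  have hlen : l.length + 1 - n = (l.length + 1 - (n + 1)) + 1 := by omega
  rw [windows, hlen, List.range_succ, List.map_append, windows, List.map_map]
  congr 1
  · refine List.map_congr_left fun i hi => ?_
    rw [List.mem_range] at hi
    rw [Function.comp_apply, List.dropLast_eq_take, List.take_take, List.length_take,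
      List.length_drop]
    congr 1
    omega
  · rw [List.map_singleton, List.take_of_length_le (by rw [List.length_drop]; omega), lastN,
      Nat.add_sub_add_right]

lemma windows_eq_take_cons_map_tail (h : n ≤ l.length) :
    windows n l = l.take n :: (windows (n + 1) l).map List.tail := by
  have hlen : l.length + 1 - n = (l.length + 1 - (n + 1)) + 1 := by omega
  rw [windows, hlen, List.range_succ_eq_map, List.map_cons, List.drop_zero, windows, List.map_map,
    List.map_map]
  congr 1
  refine List.map_congr_left fun i _ => ?_
  rw [Function.comp_apply, Function.comp_apply, ← List.drop_one, List.drop_take, List.drop_drop,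
    Nat.add_sub_cancel]

lemma windows_succ_concat (h : n ≤ l.length) (c : α) :
    windows (n + 1) (l ++ [c]) = windows (n + 1) l ++ [lastN n l ++ [c]] := by
  have hlen : (l ++ [c]).length + 1 - (n + 1) = (l.length + 1 - (n + 1)) + 1 := by
    rw [List.length_append, List.length_singleton]
    omega
  rw [windows, hlen, List.range_succ, List.map_append, windows]
  congr 1
  · refine List.map_congr_left fun i hi => ?_
    rw [List.mem_range] at hi
    rw [List.drop_append_of_le_length (by omega),
      List.take_append_of_le_length (by rw [List.length_drop]; omega)]
  · rw [List.map_singleton, List.drop_append_of_le_length (by omega), Nat.add_sub_add_right,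
      ← lastN,
      List.take_of_length_le (by rw [List.length_append, length_lastN h, List.length_singleton])]

lemma concat_infix_concat_iff {a c : α} :
    v ++ [a] <:+: l ++ [c] ↔ v ++ [a] <:+: l ∨ v = lastN v.length l ∧ a = c := by
  rw [List.infix_concat_iff, List.suffix_concat_iff, lastN, ← List.suffix_iff_eq_drop]
  simp [and_comm, or_comm]

lemma length_le_of_nodup_windows [Fintype α] (h : (windows n l).Nodup) :
    l.length + 1 - n ≤ Fintype.card α ^ n := by
  let W : List (List.Vector α n) := (windows n l).attachWith _ fun _ hw => (mem_windows.1 hw).1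
  have hW : W.Nodup := h.pmap fun _ _ _ _ => congrArg Subtype.val
  calc l.length + 1 - n = W.length := (List.length_attachWith.trans length_windows).symm
    _ ≤ Fintype.card (List.Vector α n) := hW.length_le_card
    _ = Fintype.card α ^ n := card_vector n

lemma windowCount_eq_count (q n : ℕ) (w l : List (ZMod q)) :
    windowCount q n w l = (windows n l).count w := by
  rw [windowCount, windows, List.count_eq_countP, List.countP_map, List.countP_eq_length_filter]
  exact congrArg List.length (List.filter_congr fun _ _ => Bool.eq_iff_iff.2 (by simp))

end Windows

section Walks

variable {α : Type*} {l v : List α}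

/-- All out-edges of the vertex `v` are used by the walk spelled by `l`. -/
def Exhausted (l v : List α) : Prop := ∀ c, v ++ [c] <:+: l

section Degrees

variable [Fintype α]

lemma count_map_eq_card {β γ : Type*} [DecidableEq β] [BEq γ] [LawfulBEq γ]
    {W : List β} (hW : W.Nodup) {f : β → γ} {g : α → β} (hg : Function.Injective g) {y : γ}
    (hfg : ∀ x ∈ W, f x = y ↔ ∃ c, g c = x) :
    (W.map f).count y = #{c | g c ∈ W} := by
  have himage : ({c | g c ∈ W} : Finset α).image g = (W.filter fun x => f x == y).toFinset := by
    ext x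
    simp only [Finset.mem_image, Finset.mem_filter_univ, List.mem_toFinset, List.mem_filter,
      beq_iff_eq]
    constructor
    · rintro ⟨c, hc, rfl⟩
      exact ⟨hc, (hfg _ hc).2 ⟨c, rfl⟩⟩
    · rintro ⟨hx, hxy⟩
      obtain ⟨c, rfl⟩ := (hfg x hx).1 hxy
      exact ⟨c, hx, rfl⟩
  rw [← Finset.card_image_of_injective _ hg, himage, List.toFinset_card_of_nodup (hW.filter _),
    List.count_eq_countP, List.countP_map, List.countP_eq_length_filter]
  rfl

variable [DecidableEq α]

lemma count_map_dropLast_windows (h : (windows (v.length + 1) l).Nodup) :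
    ((windows (v.length + 1) l).map List.dropLast).count v = #{c | v ++ [c] <:+: l} := by
  rw [count_map_eq_card h (g := fun c => v ++ [c]) (fun a b hab => by simpa using hab)]
  · simp [mem_windows]
  · intro e he
    have hne : e ≠ [] := List.ne_nil_of_length_eq_add_one (mem_windows.1 he).1
    constructor
    · rintro rfl
      exact ⟨e.getLast hne, List.dropLast_append_getLast hne⟩
    · rintro ⟨c, rfl⟩
      exact List.dropLast_concat

lemma count_map_tail_windows (h : (windows (v.length + 1) l).Nodup) :
    ((windows (v.length + 1) l).map List.tail).count v = #{c | c :: v <:+: l} := by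
  rw [count_map_eq_card h (g := fun c => c :: v) (fun a b hab => by simpa using hab)]
  · simp [mem_windows]
  · intro e he
    have hne : e ≠ [] := List.ne_nil_of_length_eq_add_one (mem_windows.1 he).1
    constructor
    · rintro rfl
      exact ⟨e.head hne, List.cons_head_tail hne⟩
    · rintro ⟨c, rfl⟩
      exact List.tail_cons

/-- Both sides count the visits of the walk to the vertex `v`. -/
lemma card_outEdges_add_eq_card_inEdges_add (hv : v.length ≤ l.length)
    (h : (windows (v.length + 1) l).Nodup) :
    #{c | v ++ [c] <:+: l} + (if lastN v.length l = v then 1 else 0) =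
      #{c | c :: v <:+: l} + (if l.take v.length = v then 1 else 0) := by
  have hout := congrArg (List.count v) (windows_eq_map_dropLast_concat hv)
  have hin := congrArg (List.count v) (windows_eq_take_cons_map_tail hv)
  rw [List.count_append, count_map_dropLast_windows h, List.count_singleton] at hout
  rw [List.count_cons, count_map_tail_windows h] at hin
  simpa only [beq_iff_eq] using hout.symm.trans hin

lemma exhausted_iff_card : Exhausted l v ↔ #{c | v ++ [c] <:+: l} = Fintype.card α := by
  rw [← Finset.card_univ, Finset.card_filter_eq_iff]
  simp [Exhausted]

end Degrees

variable [Finite α]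

lemma Exhausted.lastN_eq_take {n : ℕ} (h : Exhausted l (lastN n l)) (hn : n ≤ l.length)
    (hnodup : (windows (n + 1) l).Nodup) : lastN n l = l.take n := by
  classical
  have := Fintype.ofFinite α
  have hlen := length_lastN hn
  have hbalance := card_outEdges_add_eq_card_inEdges_add (v := lastN n l) (l := l)
    (by rwa [hlen]) (by rwa [hlen])
  rw [exhausted_iff_card.1 h, hlen, if_pos rfl] at hbalance
  have hin : #{c | c :: lastN n l <:+: l} ≤ Fintype.card α := Finset.card_le_univ _
  by_contra hne
  rw [if_neg (Ne.symm hne)] at hbalance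
  omega

lemma Exhausted.cons_infix (h : Exhausted l v) (hv : v.length ≤ l.length)
    (hnodup : (windows (v.length + 1) l).Nodup) (hclosed : lastN v.length l = l.take v.length)
    (c : α) : c :: v <:+: l := by
  classical
  have := Fintype.ofFinite α
  have hbalance := card_outEdges_add_eq_card_inEdges_add hv hnodup
  rw [exhausted_iff_card.1 h, hclosed, Nat.add_right_cancel_iff, ← Finset.card_univ, eq_comm,
    Finset.card_filter_eq_iff] at hbalance
  exact hbalance c (Finset.mem_univ c)

end Walks

section Greedy

variable {q s n : ℕ} {P : List (ZMod q) → Fin q → ZMod q} {I l v : List (ZMod q)} {c : ZMod q}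

lemma exhausted_of_nextDigit_eq_none (hP : IsPrefFun q s P) (hs : s ≤ l.length)
    (h : nextDigit q s (n + 1) P l = none) : Exhausted l (lastN n l) := by
  intro c
  obtain ⟨i, rfl⟩ := (hP _ (length_lastN hs)).surjective c
  simpa using List.find?_eq_none.1 h _ (List.mem_map_of_mem (List.mem_finRange i))

lemma not_infix_of_nextDigit_eq_some (h : nextDigit q s (n + 1) P l = some c) :
    ¬ lastN n l ++ [c] <:+: l := by
  simpa using List.find?_some h

lemma length_greedyAux_of_nextDigit_ne_none (f : ℕ)
    (h : nextDigit q s n P (greedyAux q s n P f l) ≠ none) :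
    (greedyAux q s n P f l).length = l.length + f := by
  induction f generalizing l with
  | zero => rfl
  | succ f ih =>
    cases hc : nextDigit q s n P l with
    | none =>
      simp only [greedyAux, hc] at h
      exact absurd rfl h
    | some c =>
      simp only [greedyAux, hc] at h ⊢
      rw [ih h, List.length_append, List.length_singleton]
      omega

lemma greedyAux_induction {p : List (ZMod q) → Prop}
    (hstep : ∀ l c, p l → nextDigit q s n P l = some c → p (l ++ [c])) (f : ℕ) (hl : p l) :
    p (greedyAux q s n P f l) := by
  induction f generalizing l with
  | zero => exact hl
  | succ f ih =>
    cases hc : nextDigit q s n P l with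
    | none => simpa only [greedyAux, hc] using hl
    | some c => simpa only [greedyAux, hc] using ih (hstep l c hl hc)

variable [NeZero q]

/-- The digit least preferred by `P`, a preference function of span `s`, after the word `v`. -/
def leastPref (s : ℕ) (P : List (ZMod q) → Fin q → ZMod q) (v : List (ZMod q)) : ZMod q :=
  P (lastN s v) ⊤

/-- The successor of the vertex `v` in the de Bruijn graph along its least preferred digit. -/
def leastSucc (s : ℕ) (P : List (ZMod q) → Fin q → ZMod q) (v : List (ZMod q)) : List (ZMod q) :=
  (v ++ [leastPref s P v]).tail

lemma length_leastSucc : (leastSucc s P v).length = v.length := by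
  simp [leastSucc]

lemma infix_of_nextDigit_eq_leastPref (hP : IsPrefFun q s P) (hs : s ≤ l.length)
    (h : nextDigit q s (n + 1) P l = some (leastPref s P l)) (hc : c ≠ leastPref s P l) :
    lastN n l ++ [c] <:+: l := by
  have hbij := hP _ (length_lastN hs)
  obtain ⟨-, i, hi, hPi, hused⟩ := List.find?_eq_some_iff_getElem.1 h
  obtain ⟨j, rfl⟩ := hbij.surjective c
  have hi_top : (⟨i, by simpa using hi⟩ : Fin q) = ⊤ :=
    hbij.injective (by simpa [leastPref] using hPi)
  have hji : (j : ℕ) < i :=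
    Fin.lt_def.1 (hi_top ▸ lt_top_iff_ne_top.2 fun hj => hc (congrArg _ hj))
  simpa using hused j hji

/-- The invariants of the greedy construction started from `I`. In `exhausted`, `I.dropLast` is
exempt since its out-edge `I` is used without having been chosen by the greedy rule. -/
structure GreedyInvariant (s n : ℕ) (P : List (ZMod q) → Fin q → ZMod q) (I l : List (ZMod q)) :
    Prop where
  isPrefix : I <+: l
  nodup : (windows (n + 1) l).Nodup
  exhausted : ∀ v : List (ZMod q), v.length = n → v ≠ I.dropLast →
    v ++ [leastPref s P v] <:+: l → Exhausted l v

lemma GreedyInvariant.le_length (h : GreedyInvariant s n P I l) (hI : I.length = n + 1) :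
    n ≤ l.length := by
  have := h.isPrefix.length_le
  omega

lemma GreedyInvariant.self (hI : I.length = n + 1) : GreedyInvariant s n P I I where
  isPrefix := List.prefix_rfl
  nodup := by simp [← hI, windows_length_self]
  exhausted v hv hvI hused := by
    have heq := hused.eq_of_length (by simp [hv, hI])
    exact absurd (by rw [← heq, List.dropLast_concat]) hvI

lemma GreedyInvariant.concat (h : GreedyInvariant s n P I l) (hP : IsPrefFun q s P) (hs : s ≤ n)
    (hI : I.length = n + 1) (hc : nextDigit q s (n + 1) P l = some c) :
    GreedyInvariant s n P I (l ++ [c]) where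
  isPrefix := h.isPrefix.trans (List.prefix_append _ _)
  nodup := by
    rw [windows_succ_concat (h.le_length hI), ← List.concat_eq_append, List.nodup_concat]
    exact ⟨fun hmem => not_infix_of_nextDigit_eq_some hc (mem_windows.1 hmem).2, h.nodup⟩
  exhausted v hv hvI hused a := by
    subst hv
    have hn := h.le_length hI
    rw [concat_infix_concat_iff] at hused ⊢
    rcases hused with hused | ⟨hlast, rfl⟩
    · exact Or.inl (h.exhausted v rfl hvI hused a)
    · have hpref : leastPref s P v = leastPref s P l := by
        rw [leastPref, hlast, lastN_lastN hs hn, leastPref]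
      rw [hpref] at hc ⊢
      refine (eq_or_ne a (leastPref s P l)).symm.imp (fun ha => ?_) (fun ha => ⟨hlast, ha⟩)
      rw [hlast]
      exact infix_of_nextDigit_eq_leastPref hP (hs.trans hn) hc ha

lemma greedyInvariant_greedy (hP : IsPrefFun q s P) (hs : s ≤ n) (hI : I.length = n + 1) :
    GreedyInvariant s n P I (greedy q s (n + 1) P I) :=
  greedyAux_induction (fun _ _ h hc => h.concat hP hs hI hc) _ (.self hI)

lemma nextDigit_greedy_eq_none (hI : I.length = n + 1)
    (h : GreedyInvariant s n P I (greedy q s (n + 1) P I)) :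
    nextDigit q s (n + 1) P (greedy q s (n + 1) P I) = none := by
  by_contra hne
  have hlen := length_greedyAux_of_nextDigit_ne_none _ hne
  have hle := length_le_of_nodup_windows h.nodup
  rw [greedy, hlen, ZMod.card] at hle
  omega

lemma GreedyInvariant.lastN_eq_dropLast (h : GreedyInvariant s n P I l) (hI : I.length = n + 1)
    (hlast : Exhausted l (lastN n l)) : lastN n l = I.dropLast := by
  have hprefix := List.prefix_iff_eq_take.1 (I.dropLast_prefix.trans h.isPrefix)
  rw [List.length_dropLast, hI, Nat.add_sub_cancel] at hprefix
  exact (hlast.lastN_eq_take (h.le_length hI) h.nodup).trans hprefix.symm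

lemma GreedyInvariant.exhausted_of_leastSucc (h : GreedyInvariant s n P I l)
    (hI : I.length = n + 1) (hlast : Exhausted l (lastN n l)) (hv : v.length = n)
    (hsucc : Exhausted l (leastSucc s P v)) : Exhausted l v := by
  have hn := h.le_length hI
  have hclosed := hlast.lastN_eq_take hn h.nodup
  by_cases hvI : v = I.dropLast
  · rwa [hvI, ← h.lastN_eq_dropLast hI hlast]
  have hlen : (leastSucc s P v).length = n := length_leastSucc.trans hv
  have hin := hsucc.cons_infix (by rwa [hlen]) (by rw [hlen]; exact h.nodup) (by rwa [hlen])
    ((v ++ [leastPref s P v]).head (by simp))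
  rw [leastSucc, List.cons_head_tail] at hin
  exact h.exhausted v hv hvI hin

lemma GreedyInvariant.exhausted_of_iterate_leastSucc (h : GreedyInvariant s n P I l)
    (hI : I.length = n + 1) (hlast : Exhausted l (lastN n l)) (k : ℕ) (hv : v.length = n)
    (hk : (leastSucc s P)^[k] v = I.dropLast) : Exhausted l v := by
  induction k generalizing v with
  | zero =>
    rw [Function.iterate_zero_apply] at hk
    rwa [hk, ← h.lastN_eq_dropLast hI hlast]
  | succ k ih =>
    rw [Function.iterate_succ_apply] at hk
    exact h.exhausted_of_leastSucc hI hlast hv (ih (length_leastSucc.trans hv) hk)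

theorem windowCount_greedy_eq_one_of_iterate_leastSucc (hP : IsPrefFun q s P) (hs : s ≤ n)
    (hI : I.length = n + 1)
    (hreach : ∀ v : List (ZMod q), v.length = n → ∃ k, (leastSucc s P)^[k] v = I.dropLast)
    {w : List (ZMod q)} (hw : w.length = n + 1) :
    windowCount q (n + 1) w (greedy q s (n + 1) P I) = 1 := by
  have hinv := greedyInvariant_greedy hP hs hI
  have hlast := exhausted_of_nextDigit_eq_none hP (hs.trans (hinv.le_length hI))
    (nextDigit_greedy_eq_none hI hinv)
  have hv : w.dropLast.length = n := by rw [List.length_dropLast, hw, Nat.add_sub_cancel]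
  obtain ⟨k, hk⟩ := hreach w.dropLast hv
  have hused := hinv.exhausted_of_iterate_leastSucc hI hlast k hv hk
    (w.getLast (List.ne_nil_of_length_eq_add_one hw))
  rw [List.dropLast_append_getLast] at hused
  rw [windowCount_eq_count]
  exact List.count_eq_one_of_mem hinv.nodup (mem_windows.2 ⟨hw, hused⟩)

end Greedy

section SpanOne

variable {q n : ℕ} [NeZero q] {P : List (ZMod q) → Fin q → ZMod q}

lemma leastSucc_one_concat (v : List (ZMod q)) (a : ZMod q) :
    leastSucc 1 P (v ++ [a]) = (v ++ [a, P [a] ⊤]).tail := by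
  simp [leastSucc, leastPref, lastN]

lemma iterate_leastSucc_one_concat (v : List (ZMod q)) (a : ZMod q) (k : ℕ) :
    (leastSucc 1 P)^[k] (v ++ [a]) = (v ++ List.iterate (P [·] ⊤) a (k + 1)).drop k := by
  induction k with
  | zero => rfl
  | succ k ih =>
    have hk : k ≤ (v ++ List.iterate (P [·] ⊤) a k).length := by simp
    rw [Function.iterate_succ_apply', ih, List.iterate_add, ← List.append_assoc,
      List.drop_append_of_le_length hk, List.iterate, List.iterate, leastSucc_one_concat,
      ← List.drop_one, ← List.drop_append_of_le_length hk, List.drop_drop, List.append_assoc,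
      List.iterate_add _ _ k 2]
    rfl

lemma iterate_leastSucc_one_eq_iterate (v : List (ZMod q)) (a : ZMod q) (j : ℕ) :
    (leastSucc 1 P)^[v.length + j] (v ++ [a]) =
      List.iterate (P [·] ⊤) ((P [·] ⊤)^[j] a) (v.length + 1) := by
  rw [iterate_leastSucc_one_concat, List.drop_append, Nat.add_sub_cancel_left,
    List.drop_eq_nil_of_le (Nat.le_add_right _ _), List.nil_append, Nat.add_right_comm,
    Nat.add_comm, List.iterate_add, List.drop_left' (List.length_iterate _ _ _)]

theorem windowCount_greedy_eq_one_of_forall_orbit (hP : IsPrefFun q 1 P) (hn : 1 ≤ n) {b : ZMod q}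
    (horbit : ∀ a, ∃ j, (P [·] ⊤)^[j] a = b) {I : List (ZMod q)} (hI : I.length = n + 1)
    (hIb : I.dropLast = List.iterate (P [·] ⊤) b n) {w : List (ZMod q)} (hw : w.length = n + 1) :
    windowCount q (n + 1) w (greedy q 1 (n + 1) P I) = 1 := by
  refine windowCount_greedy_eq_one_of_iterate_leastSucc hP hn hI (fun v hv => ?_) hw
  obtain rfl | ⟨u, a, rfl⟩ := v.eq_nil_or_concat'
  · rw [List.length_nil] at hv
    omega
  · obtain ⟨j, rfl⟩ := horbit a
    have hu : u.length + 1 = n := by simpa using hv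
    exact ⟨u.length + j, by rw [iterate_leastSucc_one_eq_iterate, hu, hIb]⟩

end SpanOne

lemma getD_eq_iterate {α : Type*} {f : α → α} {l : List α} {x : α} {m k : ℕ}
    (h : ∀ i, i + 1 < m → l.getD (i + 1) x = f (l.getD i x)) (hk : k < m) :
    l.getD k x = f^[k] (l.getD 0 x) := by
  induction k with
  | zero => rfl
  | succ k ih => rw [h k hk, ih (by omega), Function.iterate_succ_apply']

section PreferSame

variable {q d : ℕ} [NeZero q]

lemma bijective_fin_natCast_mul (hd : Nat.Coprime d q) :
    Function.Bijective fun j : Fin q => ((j : ℕ) : ZMod q) * (d : ZMod q) := by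
  refine (Fintype.bijective_iff_surjective_and_card _).2 ⟨fun a => ?_, by simp [ZMod.card]⟩
  refine ⟨⟨(a * (d : ZMod q)⁻¹).val, ZMod.val_lt _⟩, ?_⟩
  simp only [ZMod.natCast_zmod_val]
  rw [mul_assoc, mul_comm _ (d : ZMod q), ZMod.coe_mul_inv_eq_one d hd, mul_one]

lemma isPrefFun_SprefL (hd : Nat.Coprime d q) : IsPrefFun q 1 (SprefL q d) := fun x _ =>
  (Equiv.addLeft x.headI).bijective.comp (bijective_fin_natCast_mul hd)

lemma SprefL_singleton_top (a : ZMod q) : SprefL q d [a] ⊤ = a + -(d : ZMod q) := by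
  rw [SprefL, List.headI_cons, Fin.val_top, Nat.cast_pred (NeZero.pos q), CharP.cast_eq_zero,
    zero_sub, neg_one_mul]

lemma exists_iterate_SprefL_eq (hd : Nat.Coprime d q) (a b : ZMod q) :
    ∃ j, (SprefL q d [·] ⊤)^[j] a = b := by
  obtain ⟨j, hj⟩ := (bijective_fin_natCast_mul hd).surjective (a - b)
  refine ⟨j, ?_⟩
  simp only [SprefL_singleton_top, add_right_iterate, nsmul_eq_mul]
  linear_combination -hj

end PreferSame

theorem sSeq_deBruijn_general {q n d : ℕ} [NeZero q] (hn : 2 ≤ n) (hd : Nat.Coprime d q)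
    {I : List (ZMod q)} (hI : I.length = n)
    (hIalt : ∀ k, k + 2 < n →
      I.getD (k + 1) 0 = I.getD k 0 + ((d * (q - 1) : ℕ) : ZMod q))
    {w : List (ZMod q)} (hw : w.length = n) :
    windowCount q n w (greedy q 1 n (SprefL q d) I) = 1 := by
  obtain ⟨n, rfl⟩ : ∃ m, n = m + 1 := ⟨n - 1, by omega⟩
  refine windowCount_greedy_eq_one_of_forall_orbit (isPrefFun_SprefL hd) (by omega)
    (fun a => exists_iterate_SprefL_eq hd a (I.getD 0 0)) hI ?_ hw
  have hstep : ∀ k, k + 1 < n → I.getD (k + 1) 0 = SprefL q d [I.getD k 0] ⊤ := fun k hk => by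
    rw [hIalt k (by omega), SprefL, List.headI_cons, Fin.val_top, mul_comm d, Nat.cast_mul]
  refine List.ext_getElem (by simp [hI]) fun i hi _ => ?_
  have hin : i < n := by simpa [hI] using hi
  rw [List.getElem_dropLast, List.getElem_iterate, ← List.getD_eq_getElem I 0]
  exact getD_eq_iterate (f := (SprefL q d [·] ⊤)) hstep hin

/-- For `gcd(d,q) = 1` and an initial word `I` that is an
alternating string with step `d(q-1)` (i.e. `I_{k+1} = I_k + d(q-1) (mod q)`),
the generalized prefer-same sequence `s_n = (S,I)` is a full de Bruijn
sequence of order `n`: every `n`-word occurs exactly once as a window. -/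
theorem sSeq_deBruijn (q n d : ℕ) (hq : 2 ≤ q) (hn : 2 ≤ n)
    (hd : Nat.Coprime d q)
    (I : List (ZMod q)) (hI : I.length = n)
    (hIalt : ∀ k, k + 1 < n →
      I.getD (k + 1) 0 = I.getD k 0 + ((d * (q - 1) : ℕ) : ZMod q)) :
    ∀ w : List (ZMod q), w.length = n →
      windowCount q n w (greedy q 1 n (SprefL q d) I) = 1 := by
  intro w hw
  have : NeZero q := ⟨by omega⟩
  exact sSeq_deBruijn_general hn hd hI (fun k hk => hIalt k (by omega)) hw

end PaperDB
end

section
/- Let q ≥ 2, n ≥ 2, gcd(d,q) = 1, and let o_n = (O,0^n) be the generalized prefer-opposite sequence. For every digit a ∈ A, the digit a does not appear in o_n at any position strictly after the end of the last occurrence of the (n−1)-word a^{n−1} (the digit a repeated n−1 times) as a contiguous window of o_n. -/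
/-!
View the `n`-words as the edges `init w → tail w` of the de Bruijn graph on the words of length
`n - 1`; the greedy sequence is a trail that starts at the vertex `0^(n-1)`.

The whole graph is balanced (each vertex has as many incoming as outgoing edges), so the set of
unused edges is balanced up to the two ends of the trail. When the trail halts, no unused edge
leaves its final vertex; hence the trail is closed and the unused edges are balanced. Repeating the
last digit is the least preferred choice, so a vertex `ya` entered by an unused edge, and hence
left by one, is left by the unused edge `yaa`. Iterating, an unused word ending in `a` forces `a^n`
to be unused. In particular no unused word ends in `0`.

Measure digits in multiples of `d`, so that the preference list of `a` is
`a+1, …, q-1, 0, 1, …, a`. The edges appending `0` are used, so an unused edge appends to a word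
ending in `a` a digit at most `a`. By balance the last and the last but one digits of the unused
words have equal sums, so they agree in each unused word, and balance propagates this to the left:
all unused words are constant.

Finally let `a ≠ 0` and consider the last occurrence of `a`, at the end of the vertex `v = ya`. As
`va` is the edge by which `v` would be left last, and the trail leaves `v` by another edge after
the last `a`, the edge `va` is unused. Hence it is constant and `v = a^(n-1)`. For `a = 0`, the
sequence ends in `0^(n-1)`.
-/

namespace PaperDB

/-- The generalized prefer-opposite preference function `O^{(q,d)}`, of span 1:
`O_j(a) = a + j·d (mod q)` for `j = 1,…,q`; the `Fin q`-index `j` denotes column `j+1`. -/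
def OprefL (q d : ℕ) : List (ZMod q) → Fin q → ZMod q :=
  fun x j => x.headI + (((j : ℕ) + 1 : ℕ) : ZMod q) * (d : ZMod q)

/-- The generalized prefer-opposite sequence `o_n = (O, 0^n)`. -/
def oSeq (q n d : ℕ) : List (ZMod q) :=
  greedy q 1 n (OprefL q d) (List.replicate n 0)

/-! ### Words as edges of the de Bruijn graph -/

section DeBruijn

variable {Z : Type*} {m n p : ℕ}

/-- The window of length `n` of the sequence `f` at position `k`. A window of length `m + 1` is an
edge of the de Bruijn graph on the words of length `m`, from its `Fin.init` to its `Fin.tail`. -/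
def window (n : ℕ) (f : ℕ → Z) (k : ℕ) : Fin n → Z := fun t => f (k + t)

lemma window_succ_eq_snoc (f : ℕ → Z) (k : ℕ) :
    window (m + 1) f k = (Fin.snoc (window m f k) (f (k + m)) : Fin (m + 1) → Z) := by
  ext t
  refine Fin.lastCases ?_ (fun s => ?_) t <;> simp [window]

lemma init_window (f : ℕ → Z) (k : ℕ) :
    (Fin.init (window (m + 1) f k) : Fin m → Z) = window m f k := by
  rw [window_succ_eq_snoc, Fin.init_snoc]

lemma tail_window (f : ℕ → Z) (k : ℕ) :
    (Fin.tail (window (m + 1) f k) : Fin m → Z) = window m f (k + 1) := by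
  ext t
  simp only [Fin.tail, window, Fin.val_succ]
  congr 1
  omega

lemma window_last (f : ℕ → Z) (k : ℕ) : window (m + 1) f k (Fin.last m) = f (k + m) := by
  simp only [window, Fin.val_last]

lemma window_succ_eq_snoc_iff {f : ℕ → Z} {k : ℕ} {x : Fin m → Z} {c : Z} :
    window (m + 1) f k = (Fin.snoc x c : Fin (m + 1) → Z) ↔ window m f k = x ∧ f (k + m) = c := by
  rw [window_succ_eq_snoc, Fin.snoc_inj]

lemma map_range_add_singleton {α : Type*} (g : ℕ → α) (M : ℕ) :
    (Multiset.range M).map g + {g M} = {g 0} + (Multiset.range M).map fun k => g (k + 1) := by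
  induction M with
  | zero => simp
  | succ M ih =>
    rw [Multiset.range_succ, Multiset.map_cons, Multiset.map_cons, Multiset.add_cons, ← ih]
    simp only [← Multiset.singleton_add]
    ac_rfl

/-- A set of words of length `m + 1` is balanced if every word of length `m` is as often a suffix
as a prefix of its elements, that is, if each vertex of the de Bruijn graph has as many incoming
as outgoing edges in the set. -/
def IsBalanced (V : Finset (Fin (m + 1) → Z)) : Prop :=
  V.val.map (Fin.tail : (Fin (m + 1) → Z) → Fin m → Z) = V.val.map Fin.init

namespace IsBalanced

variable {V : Finset (Fin (m + 1) → Z)}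

lemma exists_tail_eq_init (hV : IsBalanced V) {w : Fin (m + 1) → Z} (hw : w ∈ V) :
    ∃ w' ∈ V, (Fin.tail w' : Fin m → Z) = Fin.init w :=
  Multiset.mem_map.1 (hV ▸ Multiset.mem_map_of_mem Fin.init hw)

lemma exists_init_eq_tail (hV : IsBalanced V) {w : Fin (m + 1) → Z} (hw : w ∈ V) :
    ∃ w' ∈ V, (Fin.init w' : Fin m → Z) = Fin.tail w :=
  Multiset.mem_map.1 (hV ▸ Multiset.mem_map_of_mem Fin.tail hw)

lemma sum_tail_eq_sum_init {N : Type*} [AddCommMonoid N] (hV : IsBalanced V)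
    (φ : (Fin m → Z) → N) : ∑ w ∈ V, φ (Fin.tail w) = ∑ w ∈ V, φ (Fin.init w) := by
  simpa only [Multiset.map_map] using! congrArg (fun s => (s.map φ).sum) hV

/-- The sums of `ψ` over the last and the last but one digits agree by balance, so the termwise
inequality between them is an equality; balance then propagates it to the left. -/
lemma apply_eq_apply_last {N : Type*} [AddCommMonoid N] [PartialOrder N]
    [IsOrderedCancelAddMonoid N] {V : Finset (Fin (p + 2) → Z)} (hV : IsBalanced V) {ψ : Z → N}
    (hψ : Function.Injective ψ)
    (hle : ∀ w ∈ V, ψ (w (Fin.last (p + 1))) ≤ ψ (w (Fin.last p).castSucc))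
    {w : Fin (p + 2) → Z} (hw : w ∈ V) (t : Fin (p + 2)) : w t = w (Fin.last (p + 1)) := by
  have penultimate_eq_last : ∀ w ∈ V, w (Fin.last p).castSucc = w (Fin.last (p + 1)) :=
    fun w hw => hψ ((Finset.sum_eq_sum_iff_of_le hle).1
      (hV.sum_tail_eq_sum_init fun x => ψ (x (Fin.last p))) w hw).symm
  induction t using Fin.reverseInduction generalizing w with
  | last => rfl
  | cast t ih =>
    obtain ⟨w', hw', h⟩ := hV.exists_tail_eq_init hw
    calc w t.castSucc = w' t.succ := (congrFun h t).symm
      _ = w' (Fin.last (p + 1)) := ih hw'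
      _ = w (Fin.last p).castSucc := congrFun h (Fin.last p)
      _ = w (Fin.last (p + 1)) := penultimate_eq_last w hw

end IsBalanced

/-- Rotating a word turns its prefix into its suffix. -/
lemma isBalanced_univ [Fintype Z] : IsBalanced (Finset.univ : Finset (Fin (m + 1) → Z)) := by
  let rotate : Equiv.Perm (Fin (m + 1) → Z) := (finRotate (m + 1)).arrowCongr (Equiv.refl Z)
  have tail_rotate (w : Fin (m + 1) → Z) : (Fin.tail (rotate w) : Fin m → Z) = Fin.init w := by
    ext t
    have : (finRotate (m + 1)).symm t.succ = t.castSucc := by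
      rw [Equiv.symm_apply_eq, finRotate_apply, Fin.coeSucc_eq_succ]
    simp [Fin.tail, Fin.init, rotate, this]
  rw [IsBalanced]
  calc (Finset.univ : Finset (Fin (m + 1) → Z)).val.map (Fin.tail : _ → Fin m → Z)
      = (Finset.univ.val.map rotate).map Fin.tail := by rw [Multiset.map_univ_val_equiv]
    _ = Finset.univ.val.map (Fin.init : (Fin (m + 1) → Z) → Fin m → Z) := by
      simp only [Multiset.map_map, Function.comp_def, tail_rotate]

variable [DecidableEq Z]

/-- The words of length `n` that occur in `f` at one of the first `M` positions. -/
def usedWords (n : ℕ) (f : ℕ → Z) (M : ℕ) : Finset (Fin n → Z) :=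
  (Finset.range M).image (window n f)

lemma mem_usedWords {f : ℕ → Z} {M : ℕ} {w : Fin n → Z} :
    w ∈ usedWords n f M ↔ ∃ i < M, window n f i = w := by
  simp only [usedWords, Finset.mem_image, Finset.mem_range]

variable [Fintype Z]

/-- The words of length `n` that do not occur in `f` at any of the first `M` positions. -/
def unusedWords (n : ℕ) (f : ℕ → Z) (M : ℕ) : Finset (Fin n → Z) := (usedWords n f M)ᶜ

lemma mem_unusedWords {f : ℕ → Z} {M : ℕ} {w : Fin n → Z} :
    w ∈ unusedWords n f M ↔ w ∉ usedWords n f M :=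
  Finset.mem_compl

/-- The complement of a trail is balanced, up to the two ends of the trail. -/
lemma map_tail_unusedWords {f : ℕ → Z} {M : ℕ}
    (hinj : Set.InjOn (window (m + 1) f) (Finset.range M)) :
    (unusedWords (m + 1) f M).val.map Fin.tail + {window m f M} =
      (unusedWords (m + 1) f M).val.map Fin.init + {window m f 0} := by
  set U := (usedWords (m + 1) f M).val with hU
  set V := (unusedWords (m + 1) f M).val with hV
  have univ_eq : (Finset.univ : Finset (Fin (m + 1) → Z)).val = U + V := by
    rw [hU, hV, unusedWords, ← Finset.disjUnion_val _ _ disjoint_compl_right,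
      Finset.disjUnion_eq_union, Finset.union_compl]
  have total : U.map (Fin.tail : _ → Fin m → Z) + V.map Fin.tail =
      U.map Fin.init + V.map Fin.init := by
    simpa only [IsBalanced, univ_eq, Multiset.map_add] using isBalanced_univ (Z := Z) (m := m)
  have trail : U.map Fin.init + {window m f M} = {window m f 0} + U.map Fin.tail := by
    rw [hU, usedWords, Finset.image_val_of_injOn hinj, Multiset.map_map, Multiset.map_map]
    simp only [Function.comp_def, init_window, tail_window, Finset.range_val]
    exact map_range_add_singleton (window m f) M
  refine add_left_cancel (a := U.map Fin.tail) ?_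
  rw [← add_assoc, total, add_right_comm, trail, add_comm {window m f 0}, add_right_comm, add_assoc]

end DeBruijn

/-! ### Greedy trails -/

lemma exists_last_lt {P : ℕ → Prop} {j N : ℕ} (hj : j < N) (hPj : P j) :
    ∃ J, j ≤ J ∧ J < N ∧ P J ∧ ∀ i, J < i → i < N → ¬ P i := by
  classical
  exact ⟨Nat.findGreatest P (N - 1), Nat.le_findGreatest (by omega) hPj,
    (Nat.findGreatest_le _).trans_lt (by omega),
    Nat.findGreatest_spec (Nat.le_sub_one_of_lt hj) hPj,
    fun _ hi hiN => Nat.findGreatest_is_greatest hi (by omega)⟩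

section GreedyTrail

variable {Z ι : Type*} [DecidableEq Z] {m p : ℕ} {f : ℕ → Z} {M : ℕ}

/-- The first `M` windows of length `m + 1` of `f` form a greedy trail: they are distinct, and at
each position `k > 0` the digit following the vertex `x = window m f k` is the first entry of the
preference list `P x` that produces a new window. The window at position `0` is prescribed. -/
structure IsGreedyTrail [LT ι] (P : (Fin m → Z) → ι → Z) (f : ℕ → Z) (M : ℕ) : Prop where
  injOn_window : Set.InjOn (window (m + 1) f) (Finset.range M)
  exists_index : ∀ k, 0 < k → k < M → ∃ i, P (window m f k) i = f (k + m) ∧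
    ∀ j < i, Fin.snoc (window m f k) (P (window m f k) j) ∈ usedWords (m + 1) f k

/-- A greedy trail that cannot be continued: every edge leaving its final vertex is used. -/
structure IsHaltedGreedyTrail [LT ι] (P : (Fin m → Z) → ι → Z) (f : ℕ → Z) (M : ℕ) : Prop
    extends IsGreedyTrail P f M where
  snoc_mem_usedWords : ∀ c, Fin.snoc (window m f M) c ∈ usedWords (m + 1) f M

lemma IsGreedyTrail.le_card_words [Fintype Z] [LT ι] {P : (Fin m → Z) → ι → Z}
    (h : IsGreedyTrail P f M) : M ≤ Fintype.card Z ^ (m + 1) := by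
  simpa [usedWords, Finset.card_image_of_injOn h.injOn_window] using
    Finset.card_le_univ (usedWords (m + 1) f M)

lemma IsGreedyTrail.index_lt_index [LinearOrder ι] {P : (Fin m → Z) → ι → Z}
    (h : IsGreedyTrail P f M) (hP : ∀ x, Function.Injective (P x)) {i k : ℕ} (hi : 0 < i)
    (hik : i < k) (hk : k < M) {x : Fin m → Z} (hix : window m f i = x) (hkx : window m f k = x)
    {s t : ι} (hs : P x s = f (i + m)) (ht : P x t = f (k + m)) : s < t := by
  by_contra! hts
  obtain ⟨s', hs', hused⟩ := h.exists_index i hi (hik.trans hk)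
  obtain rfl : s' = s := hP x (by rw [hs, ← hs', hix])
  have window_k : window (m + 1) f k = (Fin.snoc x (P x t) : Fin (m + 1) → Z) :=
    window_succ_eq_snoc_iff.2 ⟨hkx, ht.symm⟩
  obtain ⟨i', hi', window_i'⟩ : ∃ i' ≤ i, window (m + 1) f i' = window (m + 1) f k := by
    rcases hts.eq_or_lt with rfl | hlt
    · exact ⟨i, le_rfl, by rw [window_k, window_succ_eq_snoc_iff]; exact ⟨hix, hs.symm⟩⟩
    · obtain ⟨i', hi', h'⟩ := mem_usedWords.1 (hused t hlt)
      exact ⟨i', hi'.le, by rw [h', window_k, hix]⟩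
  have := h.injOn_window (by simpa using hi'.trans_lt (hik.trans hk)) (by simpa using hk) window_i'
  omega

/-- The edge repeating the last digit is the least preferred one, so it is the last one by which
the trail leaves a vertex. -/
lemma IsGreedyTrail.snoc_last_notMem_usedWords [LinearOrder ι] [OrderTop ι]
    {P : (Fin (p + 1) → Z) → ι → Z} (h : IsGreedyTrail P f M)
    (hP : ∀ x, Function.Injective (P x)) (htop : ∀ x, P x ⊤ = x (Fin.last p)) {k : ℕ}
    (hk : k < M) (hne : window (p + 1) f k ≠ window (p + 1) f 0)
    (hlast : ∀ i, k + p < i → i < M + (p + 1) → f i ≠ f (k + p)) :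
    Fin.snoc (window (p + 1) f k) (f (k + p)) ∉ usedWords (p + 2) f M := by
  intro hused
  obtain ⟨i, hiM, hi⟩ := mem_usedWords.1 hused
  obtain ⟨hix, hia⟩ := window_succ_eq_snoc_iff.1 hi
  have hik : i < k := by
    by_contra! hki
    exact hlast _ (by omega) (by omega) hia
  have hi0 : 0 < i := Nat.pos_of_ne_zero fun hi0 => hne (by rw [← hix, hi0])
  obtain ⟨t, ht, -⟩ := h.exists_index k (hi0.trans hik) hk
  exact not_top_lt (h.index_lt_index hP hi0 hik hk hix rfl (by rw [htop, window_last, hia]) ht)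

namespace IsHaltedGreedyTrail

/-- A trail halting elsewhere than at its start would enter its final vertex more often than it
leaves it, so by balance an edge leaving that vertex would be unused. -/
lemma window_end_eq_window_zero [Finite Z] [LT ι] {P : (Fin m → Z) → ι → Z}
    (h : IsHaltedGreedyTrail P f M) : window m f M = window m f 0 := by
  cases nonempty_fintype Z
  have hmem : window m f M ∈ (unusedWords (m + 1) f M).val.map Fin.init + {window m f 0} := by
    rw [← map_tail_unusedWords h.injOn_window]
    simp
  rcases Multiset.mem_add.1 hmem with hout | hstart
  · obtain ⟨w, hw, hwx⟩ := Multiset.mem_map.1 hout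
    refine absurd (h.snoc_mem_usedWords (w (Fin.last m))) (mem_unusedWords.1 ?_)
    rwa [← hwx, Fin.snoc_init_self]
  · exact Multiset.mem_singleton.1 hstart

section Unused

variable [Fintype Z]

lemma isBalanced_unusedWords [LT ι] {P : (Fin m → Z) → ι → Z} (h : IsHaltedGreedyTrail P f M) :
    IsBalanced (unusedWords (m + 1) f M) := by
  have := map_tail_unusedWords h.injOn_window
  rwa [h.window_end_eq_window_zero, add_left_inj] at this

lemma snoc_mem_unusedWords_of_le [LinearOrder ι] {P : (Fin m → Z) → ι → Z}
    (h : IsHaltedGreedyTrail P f M) (hP : ∀ x, Function.Injective (P x)) {x : Fin m → Z} {i j : ι}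
    (hij : i ≤ j) (hi : Fin.snoc x (P x i) ∈ unusedWords (m + 1) f M) :
    Fin.snoc x (P x j) ∈ unusedWords (m + 1) f M := by
  rw [mem_unusedWords] at hi ⊢
  contrapose! hi
  obtain ⟨k, hk, hkj⟩ := mem_usedWords.1 hi
  obtain ⟨rfl, hkj⟩ := window_succ_eq_snoc_iff.1 hkj
  rcases k.eq_zero_or_pos with rfl | hk0
  · rw [← h.window_end_eq_window_zero]
    exact h.snoc_mem_usedWords _
  rcases hij.eq_or_lt with rfl | hlt
  · exact hi
  obtain ⟨j', hj', hused⟩ := h.exists_index k hk0 hk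
  obtain rfl : j' = j := hP _ (hj'.trans hkj)
  obtain ⟨k', hk', h'⟩ := mem_usedWords.1 (hused i hlt)
  exact mem_usedWords.2 ⟨k', hk'.trans hk, h'⟩

variable [LinearOrder ι] [OrderTop ι] {P : (Fin (p + 1) → Z) → ι → Z}

/-- Repeating the last digit is the least preferred choice, so an unused word ending in `a` is
continued by unused words that append `a` again and again. -/
lemma const_mem_unusedWords (h : IsHaltedGreedyTrail P f M)
    (hP : ∀ x, Function.Bijective (P x)) (htop : ∀ x, P x ⊤ = x (Fin.last p))
    {w : Fin (p + 2) → Z} (hw : w ∈ unusedWords (p + 2) f M) :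
    (fun _ => w (Fin.last (p + 1))) ∈ unusedWords (p + 2) f M := by
  set a := w (Fin.last (p + 1)) with ha
  let g : ℕ → Z := fun k => if hk : k < p + 2 then w ⟨k, hk⟩ else a
  have g_eq : ∀ k, p + 1 ≤ k → g k = a := by
    intro k hk
    by_cases hk' : k < p + 2
    · obtain rfl : k = p + 1 := by omega
      simp only [g, dif_pos hk', ha, Fin.last]
    · exact dif_neg hk'
  have window_g_mem : ∀ k, window (p + 2) g k ∈ unusedWords (p + 2) f M := by
    intro k
    induction k with
    | zero =>
      convert hw using 1
      ext t
      simp [window, g]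
    | succ k ih =>
      obtain ⟨w', hw', hinit⟩ := h.isBalanced_unusedWords.exists_init_eq_tail ih
      rw [tail_window] at hinit
      obtain ⟨i, hi⟩ := (hP (window (p + 1) g (k + 1))).2 (w' (Fin.last (p + 1)))
      have := h.snoc_mem_unusedWords_of_le (fun x => (hP x).1) (i := i) (j := ⊤) le_top
        (x := window (p + 1) g (k + 1)) (by rwa [hi, ← hinit, Fin.snoc_init_self])
      rwa [htop, window_last, g_eq _ (by omega), ← g_eq (k + 1 + (p + 1)) (by omega),
        ← window_succ_eq_snoc] at this
  convert window_g_mem (p + 1) using 1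
  ext t
  exact (g_eq _ (by omega)).symm

variable {z : Z} {ψ : Z → ℕ}

lemma eq_last_of_mem_unusedWords (h : IsHaltedGreedyTrail P f M)
    (hP : ∀ x, Function.Bijective (P x)) (htop : ∀ x, P x ⊤ = x (Fin.last p))
    (hz : (fun _ => z) ∈ usedWords (p + 2) f M) (hψ : Function.Injective ψ)
    (hψP : ∀ x i j, P x i = z → i < j → ψ (P x j) ≤ ψ (x (Fin.last p)))
    {w : Fin (p + 2) → Z} (hw : w ∈ unusedWords (p + 2) f M) (t : Fin (p + 2)) :
    w t = w (Fin.last (p + 1)) := by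
  have snoc_z_used : ∀ x : Fin (p + 1) → Z, Fin.snoc x z ∉ unusedWords (p + 2) f M := by
    intro x hx
    have := h.const_mem_unusedWords hP htop hx
    rw [Fin.snoc_last] at this
    exact mem_unusedWords.1 this hz
  refine h.isBalanced_unusedWords.apply_eq_apply_last hψ (fun w hw => ?_) hw t
  obtain ⟨i, hi⟩ := (hP (Fin.init w)).2 z
  obtain ⟨j, hj⟩ := (hP (Fin.init w)).2 (w (Fin.last (p + 1)))
  have hij : i < j := by
    by_contra! hji
    refine snoc_z_used (Fin.init w) ?_
    rw [← hi]
    exact h.snoc_mem_unusedWords_of_le (fun x => (hP x).1) hji (by rwa [hj, Fin.snoc_init_self])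
  rw [← hj]
  exact hψP _ i j hi hij

end Unused

lemma exists_window_eq_const [Finite Z] [LinearOrder ι] [OrderTop ι]
    {P : (Fin (p + 1) → Z) → ι → Z} (h : IsHaltedGreedyTrail P f M)
    (hP : ∀ x, Function.Bijective (P x)) (htop : ∀ x, P x ⊤ = x (Fin.last p)) (hM : 0 < M)
    {z : Z} (hstart : window (p + 2) f 0 = fun _ => z) {ψ : Z → ℕ} (hψ : Function.Injective ψ)
    (hψP : ∀ x i j, P x i = z → i < j → ψ (P x j) ≤ ψ (x (Fin.last p)))
    {j : ℕ} (hj : j < M + (p + 1)) :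
    ∃ k ≤ M, window (p + 1) f k = (fun _ => f j) ∧ j < k + (p + 1) := by
  cases nonempty_fintype Z
  have start_const : window (p + 1) f 0 = fun _ => z := by
    rw [← init_window, hstart]
    rfl
  by_cases hjz : f j = z
  · exact ⟨M, le_rfl, by rw [h.window_end_eq_window_zero, start_const, hjz], hj⟩
  obtain ⟨J, hjJ, hJM, hfJ, hlast⟩ := exists_last_lt (P := (f · = f j)) hj rfl
  rw [← hfJ] at hjz hlast ⊢
  have hpJ : p ≤ J := by
    by_contra! hlt
    exact hjz (by simpa [window] using congrFun hstart ⟨J, by omega⟩)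
  obtain ⟨k, rfl⟩ := Nat.exists_eq_add_of_le' hpJ
  have ne_start : window (p + 1) f k ≠ window (p + 1) f 0 := by
    intro heq
    exact hjz (by rw [← window_last f k, heq, start_const])
  have hkM : k < M := by
    refine lt_of_le_of_ne (by omega) ?_
    rintro rfl
    exact ne_start h.window_end_eq_window_zero
  have repeat_unused : Fin.snoc (window (p + 1) f k) (f (k + p)) ∈ unusedWords (p + 2) f M :=
    mem_unusedWords.2 (h.snoc_last_notMem_usedWords (fun x => (hP x).1) htop hkM ne_start hlast)
  refine ⟨k, hkM.le, ?_, by omega⟩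
  ext t
  have := h.eq_last_of_mem_unusedWords hP htop (mem_usedWords.2 ⟨0, hM, hstart⟩) hψ hψP
    repeat_unused t.castSucc
  rwa [Fin.snoc_castSucc, Fin.snoc_last] at this

end IsHaltedGreedyTrail

end GreedyTrail

/-! ### Greedy sequences are halted greedy trails -/

section Digits

variable {α : Type*} {n : ℕ}

lemma lastN_lastN_s6 {s : ℕ} (hs : s ≤ n) (l : List α) : lastN s (lastN n l) = lastN s l := by
  simp only [lastN, List.drop_drop, List.length_drop]
  congr 1
  omega

lemma infix_iff_exists_take_drop_eq {w l : List α} :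
    w <:+: l ↔ ∃ i, i + w.length ≤ l.length ∧ (l.drop i).take w.length = w := by
  constructor
  · rintro ⟨s, t, rfl⟩
    exact ⟨s.length, by simp, by simp⟩
  · rintro ⟨i, -, h⟩
    rw [← h]
    exact (List.take_prefix _ _).isInfix.trans (List.drop_suffix _ _).isInfix

variable [Zero α]

/-- The entries of a list as an infinite sequence, continued by `0`. -/
def digits (l : List α) : ℕ → α := fun k => l.getD k 0

lemma take_drop_eq_ofFn_window {l : List α} {i : ℕ} (hi : i + n ≤ l.length) :
    (l.drop i).take n = List.ofFn (window n (digits l) i) := by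
  refine List.ext_getElem (by simpa using Nat.le_sub_of_add_le' hi) fun t ht _ => ?_
  have : i + t < l.length := by
    rw [List.length_take, List.length_drop] at ht
    omega
  simp [window, digits, List.getElem?_eq_getElem this]

lemma lastN_take {l : List α} {k : ℕ} (hk : k + n ≤ l.length) :
    lastN n (l.take (k + n)) = List.ofFn (window n (digits l) k) := by
  rw [lastN, List.length_take_of_le hk, Nat.add_sub_cancel, ← take_drop_eq_ofFn_window hk,
    List.drop_take, Nat.add_sub_cancel_left]

lemma ofFn_infix_take_iff {l : List α} [DecidableEq α] {k : ℕ} (hk : k + n ≤ l.length)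
    {w : Fin (n + 1) → α} :
    List.ofFn w <:+: l.take (k + n) ↔ w ∈ usedWords (n + 1) (digits l) k := by
  rw [infix_iff_exists_take_drop_eq, mem_usedWords, List.length_ofFn, List.length_take_of_le hk]
  refine exists_congr fun i => ?_
  rw [show i + (n + 1) ≤ k + n ↔ i < k by omega]
  refine and_congr_right fun hi => ?_
  rw [List.drop_take, List.take_take, min_eq_left (by omega), take_drop_eq_ofFn_window (by omega),
    List.ofFn_inj]

end Digits

section Greedy

variable {q s m : ℕ} {P : List (ZMod q) → Fin q → ZMod q}

/-- A preference function of span `s`, as a function of the whole word of length `m ≥ s`. -/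
def wordPref (s : ℕ) (P : List (ZMod q) → Fin q → ZMod q) (x : Fin m → ZMod q) :
    Fin q → ZMod q :=
  P (lastN s (List.ofFn x))

lemma nextDigit_take {L : List (ZMod q)} {k : ℕ} (hs : s ≤ m) (hk : k + m ≤ L.length) :
    nextDigit q s (m + 1) P (L.take (k + m)) =
      ((List.finRange q).map (wordPref s P (window m (digits L) k))).find? fun c =>
        Fin.snoc (window m (digits L) k) c ∉ usedWords (m + 1) (digits L) k := by
  have snoc_eq (c : ZMod q) : List.ofFn (window m (digits L) k) ++ [c] =
      List.ofFn (Fin.snoc (window m (digits L) k) c : Fin (m + 1) → ZMod q) := by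
    rw [List.ofFn_succ', List.concat_eq_append]
    simp only [Fin.snoc_castSucc, Fin.snoc_last]
  have pref_eq : P (lastN s (L.take (k + m))) = wordPref s P (window m (digits L) k) := by
    rw [wordPref, ← lastN_take hk, lastN_lastN_s6 hs]
  simp only [nextDigit, Nat.add_sub_cancel, pref_eq, lastN_take hk, snoc_eq,
    ofFn_infix_take_iff hk, decide_not]

lemma find?_map_finRange_eq_some {α : Type*} {g : Fin q → α} {p : α → Bool} {c : α}
    (h : ((List.finRange q).map g).find? p = some c) :
    p c ∧ ∃ i, g i = c ∧ ∀ j < i, ¬ p (g j) := by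
  obtain ⟨hc, i, hi, hic, hlt⟩ := List.find?_eq_some_iff_getElem.1 h
  refine ⟨hc, ⟨i, by simpa using hi⟩, by simpa using hic, fun j hj => ?_⟩
  simpa using hlt j hj

variable {n : ℕ}

lemma prefix_greedyAux (fuel : ℕ) (l : List (ZMod q)) : l <+: greedyAux q s n P fuel l := by
  induction fuel generalizing l with
  | zero => exact List.prefix_rfl
  | succ fuel ih =>
    rw [greedyAux]
    cases nextDigit q s n P l with
    | none => exact List.prefix_rfl
    | some c => exact (List.prefix_append l [c]).trans (ih (l ++ [c]))

lemma nextDigit_take_greedyAux (fuel : ℕ) (l : List (ZMod q)) {k : ℕ} (hk : l.length ≤ k)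
    (hkL : k < (greedyAux q s n P fuel l).length) :
    nextDigit q s n P ((greedyAux q s n P fuel l).take k) =
      some (digits (greedyAux q s n P fuel l) k) := by
  induction fuel generalizing l with
  | zero => exact absurd hkL hk.not_gt
  | succ fuel ih =>
    rw [greedyAux] at hkL ⊢
    cases hc : nextDigit q s n P l with
    | none =>
      rw [hc] at hkL
      exact absurd hkL hk.not_gt
    | some c =>
      simp only [hc] at hkL ⊢
      rcases hk.eq_or_lt with rfl | hlt
      · obtain ⟨r, hr⟩ := prefix_greedyAux (s := s) (n := n) (P := P) fuel (l ++ [c])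
        simp [← hr, digits, hc]
      · exact ih (l ++ [c]) (by simpa using hlt) hkL

lemma nextDigit_greedyAux_eq_none (fuel : ℕ) (l : List (ZMod q))
    (h : (greedyAux q s n P fuel l).length < l.length + fuel) :
    nextDigit q s n P (greedyAux q s n P fuel l) = none := by
  induction fuel generalizing l with
  | zero => exact absurd h (lt_irrefl _)
  | succ fuel ih =>
    rw [greedyAux] at h ⊢
    cases hc : nextDigit q s n P l with
    | none => exact hc
    | some c =>
      simp only [hc] at h ⊢
      exact ih (l ++ [c]) (by rw [List.length_append, List.length_singleton]; omega)

lemma isGreedyTrail_greedyAux (hs : s ≤ m) (fuel : ℕ) {l : List (ZMod q)}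
    (hl : l.length ≤ m + 1) :
    IsGreedyTrail (wordPref (m := m) s P) (digits (greedyAux q s (m + 1) P fuel l))
      ((greedyAux q s (m + 1) P fuel l).length - m) := by
  set L := greedyAux q s (m + 1) P fuel l
  have step {k : ℕ} (hk : 0 < k) (hkM : k < L.length - m) :
      Fin.snoc (window m (digits L) k) (digits L (k + m)) ∉ usedWords (m + 1) (digits L) k ∧
        ∃ i, wordPref s P (window m (digits L) k) i = digits L (k + m) ∧
          ∀ j < i, Fin.snoc (window m (digits L) k) (wordPref s P (window m (digits L) k) j) ∈
            usedWords (m + 1) (digits L) k := by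
    have next_eq := nextDigit_take_greedyAux (P := P) fuel l (k := k + m) (by omega)
      (Nat.add_lt_of_lt_sub hkM)
    rw [nextDigit_take hs (Nat.add_lt_of_lt_sub hkM).le] at next_eq
    simpa only [decide_eq_true_eq, not_not] using find?_map_finRange_eq_some next_eq
  refine ⟨?_, fun k hk hkM => (step hk hkM).2⟩
  have window_ne {i k : ℕ} (hik : i < k) (hk : k < L.length - m) :
      window (m + 1) (digits L) i ≠ window (m + 1) (digits L) k := by
    intro h
    refine (step (by omega) hk).1 ?_
    rw [← window_succ_eq_snoc, ← h]
    exact mem_usedWords.2 ⟨i, hik, rfl⟩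
  intro i hi k hk h
  rcases lt_trichotomy i k with hlt | rfl | hlt
  · exact absurd h (window_ne hlt (by simpa using hk))
  · rfl
  · exact absurd h.symm (window_ne hlt (by simpa using hi))

lemma isHaltedGreedyTrail_greedy [NeZero q] (hs : s ≤ m) (hP : IsPrefFun q s P)
    {I : List (ZMod q)} (hI : I.length = m + 1) :
    IsHaltedGreedyTrail (wordPref (m := m) s P) (digits (greedy q s (m + 1) P I))
      ((greedy q s (m + 1) P I).length - m) := by
  have hlen : I.length ≤ (greedy q s (m + 1) P I).length := (prefix_greedyAux _ I).length_le
  have trail := isGreedyTrail_greedyAux (P := P) hs (q ^ (m + 1)) hI.le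
  have hcard := trail.le_card_words
  rw [ZMod.card] at hcard
  have hnone : nextDigit q s (m + 1) P (greedy q s (m + 1) P I) = none :=
    nextDigit_greedyAux_eq_none (q ^ (m + 1)) I (by omega)
  rw [← greedy] at trail
  set L := greedy q s (m + 1) P I
  refine ⟨trail, fun c => ?_⟩
  obtain ⟨i, rfl⟩ := (hP (lastN s (List.ofFn (window m (digits L) (L.length - m))))
    (by rw [lastN, List.length_drop, List.length_ofFn]; omega)).2 c
  have := nextDigit_take (P := P) (L := L) (k := L.length - m) hs (by omega)
  rw [Nat.sub_add_cancel (by omega), List.take_length, hnone, eq_comm, List.find?_eq_none] at this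
  simpa only [decide_eq_true_eq, not_not] using!
    this (wordPref s P _ i) (List.mem_map_of_mem (List.mem_finRange i))

end Greedy

/-! ### The prefer-opposite sequence -/

section PreferOpposite

variable {q d p : ℕ}

lemma replicate_prefix_oSeq (n : ℕ) : List.replicate n 0 <+: oSeq q n d :=
  prefix_greedyAux (q ^ n) (List.replicate n 0)

lemma window_digits_oSeq_zero (n : ℕ) : window n (digits (oSeq q n d)) 0 = fun _ => 0 := by
  obtain ⟨r, hr⟩ := replicate_prefix_oSeq (q := q) (d := d) n
  ext t
  simp [window, digits, ← hr, List.getElem?_append]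

lemma wordPref_OprefL (x : Fin (p + 1) → ZMod q) (j : Fin q) :
    wordPref 1 (OprefL q d) x j = x (Fin.last p) + ((j + 1 : ℕ) : ZMod q) * d := by
  have lastN_ofFn : lastN 1 (List.ofFn x) = [x (Fin.last p)] := by
    rw [List.ofFn_succ', List.concat_eq_append]
    simp [lastN]
  rw [wordPref, lastN_ofFn, OprefL, List.headI]

variable [NeZero q]

lemma isPrefFun_OprefL (hd : Nat.Coprime d q) : IsPrefFun q 1 (OprefL q d) := by
  intro x _
  refine (Fintype.bijective_iff_injective_and_card _).2 ⟨fun i j hij => ?_, by simp⟩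
  have cast_succ_eq : ((i + 1 : ℕ) : ZMod q) = (j + 1 : ℕ) :=
    ((ZMod.isUnit_iff_coprime d q).2 hd).mul_right_cancel (add_left_cancel hij)
  have cast_eq : ((i : ℕ) : ZMod q) = (j : ℕ) := by
    simpa only [Nat.cast_succ, add_left_inj] using cast_succ_eq
  rw [Fin.ext_iff, ← ZMod.val_cast_of_lt i.isLt, cast_eq, ZMod.val_cast_of_lt j.isLt]

lemma wordPref_OprefL_top (x : Fin (p + 1) → ZMod q) :
    wordPref 1 (OprefL q d) x ⊤ = x (Fin.last p) := by
  rw [wordPref_OprefL, Fin.val_top, Nat.sub_add_cancel NeZero.one_le, ZMod.natCast_self, zero_mul,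
    add_zero]

lemma bijective_wordPref_OprefL (hd : Nat.Coprime d q) (x : Fin (p + 1) → ZMod q) :
    Function.Bijective (wordPref 1 (OprefL q d) x) :=
  isPrefFun_OprefL hd _ (by simp [lastN])

lemma val_mul_inv_injective (hd : Nat.Coprime d q) :
    Function.Injective fun c : ZMod q => (c * (d : ZMod q)⁻¹).val := by
  refine (ZMod.val_injective q).comp (Function.LeftInverse.injective (g := (· * (d : ZMod q))) ?_)
  intro c
  dsimp only
  rw [mul_assoc, mul_comm _ (d : ZMod q), ZMod.coe_mul_inv_eq_one d hd, mul_one]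

lemma val_mul_inv_wordPref_OprefL_le (hd : Nat.Coprime d q) (x : Fin (p + 1) → ZMod q)
    {i j : Fin q} (hi : wordPref 1 (OprefL q d) x i = 0) (hij : i < j) :
    (wordPref 1 (OprefL q d) x j * (d : ZMod q)⁻¹).val ≤
      (x (Fin.last p) * (d : ZMod q)⁻¹).val := by
  set c := x (Fin.last p) * (d : ZMod q)⁻¹
  have mul_inv_eq (k : Fin q) :
      wordPref 1 (OprefL q d) x k * (d : ZMod q)⁻¹ = c + ((k + 1 : ℕ) : ZMod q) := by
    rw [wordPref_OprefL, add_mul, mul_assoc, ZMod.coe_mul_inv_eq_one d hd, mul_one]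
  have add_eq_zero : c + ((i + 1 : ℕ) : ZMod q) = 0 := by rw [← mul_inv_eq, hi, zero_mul]
  have q_le : q ≤ c.val + (i + 1) := by
    refine Nat.le_of_dvd (by omega) ((ZMod.natCast_eq_zero_iff _ _).1 ?_)
    rw [Nat.cast_add, ZMod.natCast_zmod_val, add_eq_zero]
  have add_eq_sub : c + ((j + 1 : ℕ) : ZMod q) = ((j - i : ℕ) : ZMod q) := by
    rw [show (j + 1 : ℕ) = (i + 1) + (j - i) by omega, Nat.cast_add, ← add_assoc, add_eq_zero,
      zero_add]
  calc (wordPref 1 (OprefL q d) x j * (d : ZMod q)⁻¹).val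
      = (j - i : ℕ) % q := by rw [mul_inv_eq, add_eq_sub, ZMod.val_natCast]
    _ ≤ j - i := Nat.mod_le _ _
    _ ≤ c.val := by omega

lemma isHaltedGreedyTrail_oSeq (hd : Nat.Coprime d q) :
    IsHaltedGreedyTrail (wordPref (m := p + 1) 1 (OprefL q d)) (digits (oSeq q (p + 2) d))
      ((oSeq q (p + 2) d).length - (p + 1)) :=
  isHaltedGreedyTrail_greedy (by omega) (isPrefFun_OprefL hd) List.length_replicate

end PreferOpposite

/-- In the generalized prefer-opposite sequence `o_n`, the
digit `a` does not appear strictly after the end of the last occurrence of the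
`(n-1)`-word `a^{n-1}`: every position `j` carrying the digit `a` satisfies
`j < i + (n-1)` for some occurrence of `a^{n-1}` starting at position `i`. -/
theorem digit_not_after_last_block (q n d : ℕ) (hq : 2 ≤ q) (hn : 2 ≤ n)
    (hd : Nat.Coprime d q) :
    ∀ a : ZMod q, ∀ j, j < (oSeq q n d).length → (oSeq q n d).getD j 0 = a →
      ∃ i, i + (n - 1) ≤ (oSeq q n d).length ∧
        ((oSeq q n d).drop i).take (n - 1) = List.replicate (n - 1) a ∧
        j < i + (n - 1) := by
  rintro _ j hj rfl
  have : NeZero q := ⟨by omega⟩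
  obtain ⟨p, rfl⟩ := Nat.exists_eq_add_of_le' hn
  have length_oSeq : p + 2 ≤ (oSeq q (p + 2) d).length := by
    simpa using (replicate_prefix_oSeq (p + 2)).length_le
  obtain ⟨i, hi, hblock, hji⟩ := (isHaltedGreedyTrail_oSeq (p := p) hd).exists_window_eq_const
    (bijective_wordPref_OprefL hd) wordPref_OprefL_top (by omega) (window_digits_oSeq_zero _)
    (val_mul_inv_injective hd) (fun x _ _ => val_mul_inv_wordPref_OprefL_le hd x)
    (j := j) (by omega)
  refine ⟨i, by omega, ?_, hji⟩
  rw [take_drop_eq_ofFn_window (by omega)]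
  exact (congrArg List.ofFn hblock).trans (List.ofFn_const _ _)

end PaperDB
end
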